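/- Let X be a real Banach space, let h : X → ℝ be Lipschitz, let x ∈ X, and suppose 0 ∉ ∂°h(x). Let C := {y ∈ X : h(y) ≤ h(x)}. Then the normal cone to C at x satisfies N_C(x) ⊆ ⋃_{λ ≥ 0} λ·∂°h(x), i.e. every ν ∈ N_C(x) can be written ν = λ·η for some λ ≥ 0 and η ∈ ∂°h(x). -/

import Mathlib

/-! Put `p v = h°(x;v)`, a sublinear function bounded above by `M * ‖v‖`. Since `0 ∉ ∂°h(x)`,
`p` takes a negative value. Every `v` with `p v < 0` is tangent to the sublevel set
(`mem_contingentCone_of_clarkeDeriv_neg`), so a normal functional `ν` satisfies `ν v ≤ 0` there.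
A Farkas-type argument (`exists_multiplier`) then gives `l ≥ 0` with `ν ≤ l * p`. If `l > 0`, the
functional `l⁻¹ • ν` lies in `∂°h(x)`. If `l = 0`, then `ν = 0`, and any element of `∂°h(x)` will
do; one exists by Hahn–Banach (`clarkeSubdiff_nonempty`). -/

open Filter Topology Pointwise NNReal

/-- The generalized (Clarke) directional derivative of `f` at `x` in direction `v`:
`f°(x;v) = limsup_{y→x, t↓0} (f(y+tv) − f(y))/t`. -/
noncomputable def clarkeDeriv {X : Type*} [NormedAddCommGroup X] [NormedSpace ℝ X]
    (f : X → ℝ) (x v : X) : ℝ :=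
  Filter.limsup (fun p : X × ℝ => (f (p.1 + p.2 • v) - f p.1) / p.2)
    ((𝓝 x) ×ˢ (𝓝[>] (0 : ℝ)))

/-- The Clarke subdifferential `∂°f(x) = {ζ ∈ X* : ζ(v) ≤ f°(x;v) for all v}`. -/
def clarkeSubdiff {X : Type*} [NormedAddCommGroup X] [NormedSpace ℝ X]
    (f : X → ℝ) (x : X) : Set (X →L[ℝ] ℝ) :=
  {ζ | ∀ v, ζ v ≤ clarkeDeriv f x v}

/-- The contingent (tangent) cone `T_C(x) = {v : d_C°(x;v) = 0}`. -/
noncomputable def contingentCone {X : Type*} [NormedAddCommGroup X] [NormedSpace ℝ X]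
    (C : Set X) (x : X) : Set X :=
  {v | clarkeDeriv (fun y => Metric.infDist y C) x v = 0}

/-- The normal cone `N_C(x) = {ζ ∈ X* : ζ(v) ≤ 0 for all v ∈ T_C(x)}`. -/
noncomputable def normalCone {X : Type*} [NormedAddCommGroup X] [NormedSpace ℝ X]
    (C : Set X) (x : X) : Set (X →L[ℝ] ℝ) :=
  {ζ | ∀ v ∈ contingentCone C x, ζ v ≤ 0}

/-! ### The Clarke derivative of a Lipschitz function -/

section Clarke

variable {X : Type*} [NormedAddCommGroup X] [NormedSpace ℝ X]
  {f : X → ℝ} {K : ℝ≥0}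

lemma abs_clarkeQuotient_le (hf : LipschitzWith K f) (v y : X) {t : ℝ} (ht : 0 < t) :
    |(f (y + t • v) - f y) / t| ≤ K * ‖v‖ := by
  rw [abs_div, abs_of_pos ht, div_le_iff₀ ht]
  have := hf.dist_le_mul (y + t • v) y
  rw [Real.dist_eq, dist_eq_norm, add_sub_cancel_left, norm_smul, Real.norm_eq_abs,
    abs_of_pos ht] at this
  linarith

lemma eventually_snd_pos {Y : Type*} [TopologicalSpace Y] (x : Y) :
    ∀ᶠ p : Y × ℝ in (𝓝 x) ×ˢ (𝓝[>] (0 : ℝ)), 0 < p.2 :=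
  tendsto_snd.eventually self_mem_nhdsWithin

lemma eventually_abs_clarkeQuotient_le (hf : LipschitzWith K f) (x v : X) :
    ∀ᶠ p : X × ℝ in (𝓝 x) ×ˢ (𝓝[>] (0 : ℝ)),
      |(f (p.1 + p.2 • v) - f p.1) / p.2| ≤ K * ‖v‖ := by
  filter_upwards [eventually_snd_pos x] with p hp using abs_clarkeQuotient_le hf v p.1 hp

lemma clarkeDeriv_isBounded (hf : LipschitzWith K f) (x v : X) :
    IsBoundedUnder (· ≤ ·) ((𝓝 x) ×ˢ (𝓝[>] (0 : ℝ)))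
      (fun p : X × ℝ => (f (p.1 + p.2 • v) - f p.1) / p.2) :=
  isBoundedUnder_of_eventually_le (a := K * ‖v‖)
    ((eventually_abs_clarkeQuotient_le hf x v).mono fun _ hp => (abs_le.mp hp).2)

lemma clarkeDeriv_isCobounded (hf : LipschitzWith K f) (x v : X) :
    IsCoboundedUnder (· ≤ ·) ((𝓝 x) ×ˢ (𝓝[>] (0 : ℝ)))
      (fun p : X × ℝ => (f (p.1 + p.2 • v) - f p.1) / p.2) :=
  (isBoundedUnder_of_eventually_ge (a := -(K * ‖v‖))
    ((eventually_abs_clarkeQuotient_le hf x v).mono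
      fun _ hp => (abs_le.mp hp).1)).isCoboundedUnder_le

lemma eventually_lt_of_clarkeDeriv_lt (hf : LipschitzWith K f) {x v : X} {a : ℝ}
    (ha : clarkeDeriv f x v < a) :
    ∀ᶠ p : X × ℝ in (𝓝 x) ×ˢ (𝓝[>] (0 : ℝ)), (f (p.1 + p.2 • v) - f p.1) / p.2 < a :=
  eventually_lt_of_limsup_lt ha (clarkeDeriv_isBounded hf x v)

lemma clarkeDeriv_le_of_eventually (hf : LipschitzWith K f) {x v : X} {a : ℝ}
    (ha : ∀ᶠ p : X × ℝ in (𝓝 x) ×ˢ (𝓝[>] (0 : ℝ)), (f (p.1 + p.2 • v) - f p.1) / p.2 ≤ a) :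
    clarkeDeriv f x v ≤ a :=
  limsup_le_of_le (clarkeDeriv_isCobounded hf x v) ha

lemma clarkeDeriv_le_norm (hf : LipschitzWith K f) (x v : X) :
    clarkeDeriv f x v ≤ K * ‖v‖ :=
  clarkeDeriv_le_of_eventually hf
    ((eventually_abs_clarkeQuotient_le hf x v).mono fun _ hp => (abs_le.mp hp).2)

lemma clarkeDeriv_smul_le (hf : LipschitzWith K f) (x v : X) {c : ℝ} (hc : 0 < c) :
    clarkeDeriv f x (c • v) ≤ c * clarkeDeriv f x v := by
  rw [← div_le_iff₀' hc]
  refine le_of_forall_gt_imp_ge_of_dense fun a ha => ?_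
  rw [div_le_iff₀' hc]
  have hmap : Tendsto (fun p : X × ℝ => (p.1, c * p.2)) ((𝓝 x) ×ˢ (𝓝[>] (0 : ℝ)))
      ((𝓝 x) ×ˢ (𝓝[>] (0 : ℝ))) := by
    refine tendsto_fst.prodMk (Tendsto.comp (g := fun t : ℝ => c * t) ?_ tendsto_snd)
    refine tendsto_nhdsWithin_iff.mpr ⟨?_, ?_⟩
    · have : Tendsto (fun t : ℝ => c * t) (𝓝 0) (𝓝 (c * 0)) := tendsto_id.const_mul c
      rw [mul_zero] at this
      exact this.mono_left nhdsWithin_le_nhds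
    · filter_upwards [self_mem_nhdsWithin] with t ht using mul_pos hc ht
  refine clarkeDeriv_le_of_eventually hf ?_
  filter_upwards [hmap.eventually (eventually_lt_of_clarkeDeriv_lt hf ha),
    eventually_snd_pos x] with p hp hpos
  have e : p.2 • c • v = (c * p.2) • v := by rw [smul_smul, mul_comm]
  rw [div_lt_iff₀ (mul_pos hc hpos)] at hp
  rw [e, div_le_iff₀ hpos]
  linarith

lemma clarkeDeriv_smul (hf : LipschitzWith K f) (x v : X) {c : ℝ} (hc : 0 < c) :
    clarkeDeriv f x (c • v) = c * clarkeDeriv f x v := by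
  refine le_antisymm (clarkeDeriv_smul_le hf x v hc) ?_
  have := clarkeDeriv_smul_le hf x (c • v) (inv_pos.mpr hc)
  rwa [inv_smul_smul₀ hc.ne', inv_mul_eq_div, le_div_iff₀' hc] at this

/-- The increment along `v + w` splits into the increment along `v` based at `y` and the increment
along `w` based at `y + t • v`; the moving base point is absorbed by the limsup. -/
lemma clarkeDeriv_add_le (hf : LipschitzWith K f) (x v w : X) :
    clarkeDeriv f x (v + w) ≤ clarkeDeriv f x v + clarkeDeriv f x w := by
  refine le_of_forall_pos_le_add fun ε hε => ?_
  have hmap : Tendsto (fun p : X × ℝ => (p.1 + p.2 • v, p.2)) ((𝓝 x) ×ˢ (𝓝[>] (0 : ℝ)))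
      ((𝓝 x) ×ˢ (𝓝[>] (0 : ℝ))) := by
    refine Tendsto.prodMk ?_ tendsto_snd
    have h2 : Tendsto (fun p : X × ℝ => p.2) ((𝓝 x) ×ˢ (𝓝[>] (0 : ℝ))) (𝓝 0) :=
      tendsto_snd.mono_right nhdsWithin_le_nhds
    have h1 : Tendsto (fun p : X × ℝ => p.1) ((𝓝 x) ×ˢ (𝓝[>] (0 : ℝ))) (𝓝 x) := tendsto_fst
    simpa using h1.add (h2.smul_const v)
  refine clarkeDeriv_le_of_eventually hf ?_
  filter_upwards [eventually_lt_of_clarkeDeriv_lt (v := v) hf (lt_add_of_pos_right _ (half_pos hε)),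
    hmap.eventually (eventually_lt_of_clarkeDeriv_lt (v := w) hf
      (lt_add_of_pos_right _ (half_pos hε))), eventually_snd_pos x] with p hv hw hpos
  have e : p.1 + p.2 • (v + w) = p.1 + p.2 • v + p.2 • w := by rw [smul_add, add_assoc]
  have e' : (f (p.1 + p.2 • (v + w)) - f p.1) / p.2
      = (f (p.1 + p.2 • v + p.2 • w) - f (p.1 + p.2 • v)) / p.2
        + (f (p.1 + p.2 • v) - f p.1) / p.2 := by
    rw [e]; ring
  rw [e']
  linarith

/-- Hahn–Banach applied to the sublinear function `v ↦ f°(x;v)`. -/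
lemma clarkeSubdiff_nonempty (hf : LipschitzWith K f) (x : X) : (clarkeSubdiff f x).Nonempty := by
  have hzero : 0 ≤ clarkeDeriv f x 0 := by
    have := clarkeDeriv_add_le hf x 0 0
    rw [add_zero] at this
    linarith
  obtain ⟨g, -, hg⟩ := exists_extension_of_le_sublinear (⊥ : X →ₗ.[ℝ] ℝ) (clarkeDeriv f x)
    (fun c hc v => clarkeDeriv_smul hf x v hc) (clarkeDeriv_add_le hf x) (by
      rintro ⟨y, hy⟩
      obtain rfl : y = 0 := (Submodule.mem_bot ℝ).mp hy
      have : (⊥ : X →ₗ.[ℝ] ℝ) ⟨0, hy⟩ = 0 := LinearPMap.map_zero _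
      exact this.trans_le hzero)
  refine ⟨g.mkContinuous K fun v => ?_, fun v => hg v⟩
  rw [Real.norm_eq_abs, abs_le]
  constructor
  · have := (hg (-v)).trans (clarkeDeriv_le_norm hf x (-v))
    rw [map_neg, norm_neg] at this
    linarith
  · exact (hg v).trans (clarkeDeriv_le_norm hf x v)

/-! ### Tangent directions to the sublevel set -/

lemma clarkeDeriv_infDist_nonneg {C : Set X} {x : X} (hx : x ∈ C) (v : X) :
    0 ≤ clarkeDeriv (fun y => Metric.infDist y C) x v := by
  by_contra! hneg
  have hev := eventually_lt_of_clarkeDeriv_lt (Metric.lipschitz_infDist_pt C) hneg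
  obtain ⟨t, ht, htpos⟩ := ((hev.curry.self_of_nhds).and self_mem_nhdsWithin).exists
  rw [Metric.infDist_zero_of_mem hx, sub_zero] at ht
  exact absurd ht (not_lt.mpr (div_nonneg Metric.infDist_nonneg (le_of_lt htpos)))

/-- A direction of strict Clarke descent is tangent to the sublevel set: translating a nearly
closest point `c ∈ C` of `y` by `t • v` stays in `C`, so `d_C(y + t • v) ≤ d_C(y) + ε t`. -/
lemma mem_contingentCone_of_clarkeDeriv_neg (hf : LipschitzWith K f) {x v : X}
    (hv : clarkeDeriv f x v < 0) : v ∈ contingentCone {y | f y ≤ f x} x := by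
  set C : Set X := {y | f y ≤ f x} with hC
  have hxC : x ∈ C := le_refl (f x)
  refine le_antisymm ?_ (clarkeDeriv_infDist_nonneg hxC v)
  refine le_of_forall_pos_le_add fun ε hε => ?_
  rw [zero_add]
  refine clarkeDeriv_le_of_eventually (Metric.lipschitz_infDist_pt C) ?_
  obtain ⟨P, hP, Q, hQ, hPQ⟩ := eventually_prod_iff.mp (eventually_lt_of_clarkeDeriv_lt hf hv)
  obtain ⟨r, hr, hball⟩ := Metric.eventually_nhds_iff.mp hP
  have hy : ∀ᶠ p : X × ℝ in (𝓝 x) ×ˢ (𝓝[>] (0 : ℝ)), dist p.1 x < r / 4 :=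
    tendsto_fst.eventually (Metric.ball_mem_nhds x (by positivity))
  have ht : ∀ᶠ p : X × ℝ in (𝓝 x) ×ˢ (𝓝[>] (0 : ℝ)), p.2 < r / (4 * ε) :=
    tendsto_snd.eventually (mem_nhdsWithin_of_mem_nhds (Iio_mem_nhds (by positivity)))
  filter_upwards [hy, ht, eventually_snd_pos x, tendsto_snd.eventually hQ]
    with p hpy hpt hpos hpQ
  rw [lt_div_iff₀ (by positivity)] at hpt
  have hεt : 0 < ε * p.2 := mul_pos hε hpos
  obtain ⟨c, hc, hdist⟩ := (Metric.infDist_lt_iff ⟨x, hxC⟩).mp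
    (lt_add_of_pos_right (Metric.infDist p.1 C) hεt)
  have hdx : Metric.infDist p.1 C ≤ dist p.1 x := Metric.infDist_le_dist_of_mem hxC
  have hcx : dist c x < r := by
    have h1 := dist_triangle c p.1 x
    rw [dist_comm c p.1] at h1
    nlinarith
  have hq := hPQ (hball hcx) hpQ
  rw [div_lt_iff₀ hpos, zero_mul] at hq
  have hcC : c + p.2 • v ∈ C := by
    have : f c ≤ f x := hc
    change f (c + p.2 • v) ≤ f x
    dsimp only at hq
    linarith
  have hle := Metric.infDist_le_dist_of_mem (x := p.1 + p.2 • v) hcC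
  rw [dist_add_right] at hle
  rw [div_le_iff₀ hpos]
  linarith

/-- A scalar Farkas lemma for a sublinear `p` that takes a negative value: if `ν` is nonpositive
where `p` is negative, then `ν ≤ l • p` for some `l ≥ 0`. The multiplier is the infimum of
`ν w / p w` over all `w` with `p w < 0`. -/
lemma exists_multiplier {p : X → ℝ} (hsmul : ∀ v, ∀ c : ℝ, 0 < c → p (c • v) = c * p v)
    (hadd : ∀ v w, p (v + w) ≤ p v + p w) {w₀ : X} (hw₀ : p w₀ < 0) (ν : X →L[ℝ] ℝ)
    (hν : ∀ v, p v < 0 → ν v ≤ 0) : ∃ l : ℝ, 0 ≤ l ∧ ∀ v, ν v ≤ l * p v := by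
  -- Perturbing by a small multiple of `w₀` extends `hν` to the closed condition `p v ≤ 0`.
  have hν' : ∀ v, p v ≤ 0 → ν v ≤ 0 := by
    intro v hv
    by_contra! hpos
    obtain ⟨ε, hε, hlt⟩ : ∃ ε : ℝ, 0 < ε ∧ 0 < ν v + ε * ν w₀ := by
      refine ⟨ν v / (|ν w₀| + 1), by positivity, ?_⟩
      have h1 : ν v / (|ν w₀| + 1) * (|ν w₀| + 1) = ν v := by field_simp
      have h2 : 0 < ν v / (|ν w₀| + 1) := by positivity
      nlinarith [neg_abs_le (ν w₀)]
    have h3 : p (v + ε • w₀) < 0 := by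
      have := hadd v (ε • w₀)
      rw [hsmul _ _ hε] at this
      nlinarith
    have h4 := hν _ h3
    rw [map_add, map_smul, smul_eq_mul] at h4
    linarith
  set S : Set ℝ := (fun w => ν w / p w) '' {w | p w < 0} with hS
  have hSnn : ∀ a ∈ S, 0 ≤ a := by
    rintro _ ⟨w, hw, rfl⟩
    exact div_nonneg_of_nonpos (hν w hw) (le_of_lt hw)
  have hSne : S.Nonempty := ⟨_, w₀, hw₀, rfl⟩
  refine ⟨sInf S, le_csInf hSne hSnn, fun v => ?_⟩
  rcases lt_trichotomy (p v) 0 with hv | hv | hv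
  · have : sInf S ≤ ν v / p v := csInf_le ⟨0, hSnn⟩ ⟨v, hv, rfl⟩
    rwa [le_div_iff_of_neg hv] at this
  · rw [hv, mul_zero]
    exact hν' v hv.le
  · rw [← div_le_iff₀ hv]
    refine le_csInf hSne ?_
    rintro _ ⟨w, hw, rfl⟩
    have hw' : p w < 0 := hw
    -- The coefficient `p v / (-p w)` makes `p` nonpositive at the combination with `v`.
    have hs : 0 < p v / (-p w) := div_pos hv (by linarith)
    have h1 : p (v + (p v / (-p w)) • w) ≤ 0 := by
      have := hadd v ((p v / (-p w)) • w)
      rw [hsmul _ _ hs] at this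
      have e : p v / (-p w) * p w = - p v := by
        rw [div_neg, neg_mul, div_mul_cancel₀ _ hw'.ne]
      linarith
    have h2 := hν' _ h1
    rw [map_add, map_smul, smul_eq_mul] at h2
    have e : p v / (-p w) * ν w = - (ν w / p w * p v) := by
      rw [div_neg]; ring
    rw [div_le_iff₀ hv]
    linarith

end Clarke

/-- If `h` is Lipschitz and `0 ∉ ∂°h(x)`, then for the sublevel set
`C = {y : h(y) ≤ h(x)}` one has `N_C(x) ⊆ ⋃_{λ≥0} λ·∂°h(x)`. -/
theorem normalCone_sublevel_subset
    {X : Type*} [NormedAddCommGroup X] [NormedSpace ℝ X] [CompleteSpace X]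
    (h : X → ℝ) (M : ℝ≥0) (hh : LipschitzWith M h) (x : X)
    (h0 : (0 : X →L[ℝ] ℝ) ∉ clarkeSubdiff h x) :
    ∀ ν ∈ normalCone {y : X | h y ≤ h x} x,
      ∃ l : ℝ, 0 ≤ l ∧ ∃ η ∈ clarkeSubdiff h x, ν = l • η := by
  intro ν hν
  obtain ⟨w₀, hw₀⟩ : ∃ w, clarkeDeriv h x w < 0 := by
    by_contra! hall
    exact h0 fun v => by simpa using hall v
  obtain ⟨l, hl, hle⟩ := exists_multiplier (p := clarkeDeriv h x)
    (fun v c hc => clarkeDeriv_smul hh x v hc) (clarkeDeriv_add_le hh x) hw₀ ν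
    (fun v hv => hν v (mem_contingentCone_of_clarkeDeriv_neg hh hv))
  refine ⟨l, hl, ?_⟩
  rcases hl.eq_or_lt with rfl | hpos
  · obtain ⟨η, hη⟩ := clarkeSubdiff_nonempty hh x
    refine ⟨η, hη, ?_⟩
    rw [zero_smul]
    ext v
    have h1 := hle v
    have h2 := hle (-v)
    rw [map_neg] at h2
    rw [zero_apply]
    linarith
  · refine ⟨l⁻¹ • ν, fun v => ?_, (smul_inv_smul₀ hpos.ne' ν).symm⟩
    change l⁻¹ * ν v ≤ _
    rw [inv_mul_le_iff₀ hpos]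
    exact hle v
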